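/- (Remark 2: equivalence of the boundary value problem with the integral equation.) Let A, B : ℝ → Matrix (Fin n) (Fin n) ℝ and f : ℝ → (Fin n → ℝ) be continuous, let 0 = t₁ < t₂ < … < t_m = 1 with 2 ≤ m, let F₁, …, F_m be constant n×n real matrices and α ∈ ℝⁿ, let Ψ be a fundamental matrix for ẋ = B(t)x (Ψ̇ = B(t)Ψ, Ψ(t) invertible for all t), let Ψ₁, …, Ψ_m satisfy Ψ̇_k = B(t)Ψ_k with Σ_{k=1}^{m} Ψ_k(t) = Ψ(t), and suppose F₀ = Σ_{j=1}^{m} F_j Ψ(t_j) is invertible. Then a continuous function x : ℝ → (Fin n → ℝ) satisfies ẋ(t) = A(t)x(t) + f(t) for all t together with Σ_{j=1}^{m} F_j x(t_j) = α if and only if x satisfies the integral equation x(t) = Ψ(t)·C(x) + Σ_{k=1}^{m} Ψ_k(t) ∫_{t_k}^{t} Ψ(s)⁻¹ [(A(s) − B(s)) x(s) + f(s)] ds for all t, where C(x) = F₀⁻¹ (α − Σ_{j=1}^{m} F_j Σ_{k=1}^{m} Ψ_k(t_j) ∫_{t_k}^{t_j} Ψ(s)⁻¹ [(A(s) − B(s))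 x(s) + f(s)] ds). -/

import Mathlib

open scoped Matrix

/-!
Write the equation as `ẋ = B(t)x + h` with `h = (A - B)x + f`. Variation of constants started
from a different node for each summand of `Ψ` still gives a particular solution `y`, since
differentiating the integrals produces `∑ₖ Ψₖ Ψ⁻¹ h = h`. As `Ψ⁻¹(x - y)` has zero derivative
exactly when `x` solves the same equation, the solutions are `x = Ψc + y`, and the boundary
condition then reads `F₀ c + ∑ⱼ Fⱼ y(tⱼ) = α`, which determines `c`.
-/

section MatrixCalculus

variable {𝕜 𝔸 m d : Type*} [NontriviallyNormedField 𝕜] {t : 𝕜}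

lemma hasDerivAt_matrix_iff [Finite m] [Finite d] [NormedAddCommGroup 𝔸] [NormedSpace 𝕜 𝔸]
    {M : 𝕜 → Matrix m d 𝔸} {M' : Matrix m d 𝔸} :
    HasDerivAt M M' t ↔ ∀ i j, HasDerivAt (fun s => M s i j) (M' i j) t :=
  have := Fintype.ofFinite m
  have := Fintype.ofFinite d
  hasDerivAt_pi.trans <| forall_congr' fun _ => hasDerivAt_pi

lemma hasDerivAt_mulVec [Finite m] [Fintype d] [NormedRing 𝔸] [NormedAlgebra 𝕜 𝔸]
    {M : 𝕜 → Matrix m d 𝔸} {M' : Matrix m d 𝔸} {v : 𝕜 → d → 𝔸} {v' : d → 𝔸}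
    (hM : HasDerivAt M M' t) (hv : HasDerivAt v v' t) :
    HasDerivAt (fun s => M s *ᵥ v s) (M' *ᵥ v t + M t *ᵥ v') t := by
  have := Fintype.ofFinite m
  refine hasDerivAt_pi.2 fun i => ?_
  have hrow := HasDerivAt.fun_sum (u := Finset.univ) fun j _ =>
    (hasDerivAt_matrix_iff.1 hM i j).fun_mul (hasDerivAt_pi.1 hv j)
  simpa only [Pi.add_apply, Matrix.mulVec, dotProduct, Finset.sum_add_distrib] using hrow

attribute [local instance] Matrix.linftyOpNormedRing Matrix.linftyOpNormedAlgebra in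
lemma hasDerivAt_matrix_inv [Fintype d] [DecidableEq d] [NormedCommRing 𝔸] [NormedAlgebra 𝕜 𝔸]
    [CompleteSpace 𝔸] {M : 𝕜 → Matrix d d 𝔸} {M' : Matrix d d 𝔸}
    (hM : HasDerivAt M M' t) (hu : IsUnit (M t)) :
    HasDerivAt (fun s => (M s)⁻¹) (-((M t)⁻¹ * M' * (M t)⁻¹)) t := by
  -- The library's completeness instance is about the entrywise uniformity, which agrees with that
  -- of the operator norm only after unfolding.
  have : @CompleteSpace (Matrix d d 𝔸) PseudoMetricSpace.toUniformSpace :=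
    inferInstanceAs (CompleteSpace (d → d → 𝔸))
  obtain ⟨u, hu⟩ := hu
  have hinv := hu ▸ hasFDerivAt_ringInverse (𝕜 := 𝕜) u
  simp only [Matrix.nonsing_inv_eq_ringInverse]
  exact (hinv.comp_hasDerivAt t hM).congr_deriv (by simp [← hu])

end MatrixCalculus

/-- `Ψ` is a fundamental matrix of the linear system `ẋ = B(t)x`: an invertible matrix solution. -/
structure IsFundamentalMatrix {𝕜 𝔸 d : Type*} [NontriviallyNormedField 𝕜] [NormedCommRing 𝔸]
    [NormedAlgebra 𝕜 𝔸] [Fintype d] [DecidableEq d] (B Ψ : 𝕜 → Matrix d d 𝔸) : Prop where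
  hasDerivAt : ∀ t, HasDerivAt Ψ (B t * Ψ t) t
  isUnit : ∀ t, IsUnit (Ψ t)

namespace IsFundamentalMatrix

variable {𝕜 𝔸 d : Type*} [NormedCommRing 𝔸] [Fintype d] [DecidableEq d]

section

variable [NontriviallyNormedField 𝕜] [NormedAlgebra 𝕜 𝔸] {B Ψ : 𝕜 → Matrix d d 𝔸}

lemma mul_inv (hΨ : IsFundamentalMatrix B Ψ) (t : 𝕜) : Ψ t * (Ψ t)⁻¹ = 1 :=
  Matrix.mul_nonsing_inv _ ((Matrix.isUnit_iff_isUnit_det _).1 (hΨ.isUnit t))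

lemma mulVec_inv_mulVec (hΨ : IsFundamentalMatrix B Ψ) (t : 𝕜) (v : d → 𝔸) :
    Ψ t *ᵥ (Ψ t)⁻¹ *ᵥ v = v := by
  rw [Matrix.mulVec_mulVec, hΨ.mul_inv, Matrix.one_mulVec]

lemma hasDerivAt_inv [CompleteSpace 𝔸] (hΨ : IsFundamentalMatrix B Ψ) (t : 𝕜) :
    HasDerivAt (fun s => (Ψ s)⁻¹) (-((Ψ t)⁻¹ * B t)) t := by
  simpa only [mul_assoc, hΨ.mul_inv, mul_one]
    using hasDerivAt_matrix_inv (hΨ.hasDerivAt t) (hΨ.isUnit t)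

lemma continuous_inv [CompleteSpace 𝔸] (hΨ : IsFundamentalMatrix B Ψ) :
    Continuous fun t => (Ψ t)⁻¹ :=
  continuous_matrix fun i j => continuous_iff_continuousAt.2 fun t =>
    (hasDerivAt_matrix_iff.1 (hΨ.hasDerivAt_inv t) i j).continuousAt

end

section

variable [RCLike 𝕜] [NormedAlgebra 𝕜 𝔸] [CompleteSpace 𝔸] {B Ψ : 𝕜 → Matrix d d 𝔸}

lemma homogeneous_iff_exists_eq_mulVec (hΨ : IsFundamentalMatrix B Ψ) {z : 𝕜 → d → 𝔸} :
    (∀ t, HasDerivAt z (B t *ᵥ z t) t) ↔ ∃ c, ∀ t, z t = Ψ t *ᵥ c := by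
  constructor
  · intro hz
    have hderiv : ∀ t, HasDerivAt (fun s => (Ψ s)⁻¹ *ᵥ z s) 0 t := fun t => by
      simpa only [Matrix.neg_mulVec, Matrix.mulVec_mulVec, neg_add_cancel]
        using hasDerivAt_mulVec (hΨ.hasDerivAt_inv t) (hz t)
    have hconst : ∀ t, (Ψ t)⁻¹ *ᵥ z t = (Ψ 0)⁻¹ *ᵥ z 0 := fun t =>
      is_const_of_deriv_eq_zero (fun t => (hderiv t).differentiableAt)
        (fun t => (hderiv t).deriv) t 0
    exact ⟨(Ψ 0)⁻¹ *ᵥ z 0, fun t => by rw [← hconst t, hΨ.mulVec_inv_mulVec]⟩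
  · rintro ⟨c, hc⟩ t
    rw [funext hc]
    simpa only [Matrix.mulVec_zero, add_zero, Matrix.mulVec_mulVec]
      using hasDerivAt_mulVec (hΨ.hasDerivAt t) (hasDerivAt_const t c)

lemma inhomogeneous_iff_exists_eq_mulVec_add (hΨ : IsFundamentalMatrix B Ψ)
    {h x y : 𝕜 → d → 𝔸} (hy : ∀ t, HasDerivAt y (B t *ᵥ y t + h t) t) :
    (∀ t, HasDerivAt x (B t *ᵥ x t + h t) t) ↔ ∃ c, ∀ t, x t = Ψ t *ᵥ c + y t := by
  have hdiff : (∀ t, HasDerivAt x (B t *ᵥ x t + h t) t) ↔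
      ∀ t, HasDerivAt (fun s => x s - y s) (B t *ᵥ (x t - y t)) t := by
    refine forall_congr' fun t => ⟨fun hx => ?_, fun hz => ?_⟩
    · simpa only [Matrix.mulVec_sub, add_sub_add_right_eq_sub] using hx.fun_sub (hy t)
    · simpa only [Matrix.mulVec_sub, sub_add_cancel, ← add_assoc] using hz.fun_add (hy t)
  simp only [hdiff, hΨ.homogeneous_iff_exists_eq_mulVec, sub_eq_iff_eq_add]

end

end IsFundamentalMatrix

section SplitVariation

variable {𝔸 d κ : Type*} [NormedCommRing 𝔸] [NormedAlgebra ℝ 𝔸] [Fintype d] [DecidableEq d]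
  [Fintype κ]

/-- The variation-of-constants formula for the forcing term `h`, split along the summands `Ψk k`
of the fundamental matrix `Ψ`, each with its own base point `τ k`. -/
noncomputable def splitVariation (Ψ : ℝ → Matrix d d 𝔸) (Ψk : κ → ℝ → Matrix d d 𝔸) (τ : κ → ℝ)
    (h : ℝ → d → 𝔸) (t : ℝ) : d → 𝔸 :=
  ∑ k, Ψk k t *ᵥ ∫ s in τ k..t, (Ψ s)⁻¹ *ᵥ h s

lemma hasDerivAt_splitVariation [CompleteSpace 𝔸] {B Ψ : ℝ → Matrix d d 𝔸}
    (hΨ : IsFundamentalMatrix B Ψ) {Ψk : κ → ℝ → Matrix d d 𝔸}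
    (hΨk : ∀ k t, HasDerivAt (Ψk k) (B t * Ψk k t) t) (hsum : ∀ t, ∑ k, Ψk k t = Ψ t)
    (τ : κ → ℝ) {h : ℝ → d → 𝔸} (hh : Continuous h) (t : ℝ) :
    HasDerivAt (splitVariation Ψ Ψk τ h) (B t *ᵥ splitVariation Ψ Ψk τ h t + h t) t := by
  have hg : Continuous fun s => (Ψ s)⁻¹ *ᵥ h s := hΨ.continuous_inv.matrix_mulVec hh
  have hderiv := HasDerivAt.fun_sum (u := Finset.univ) fun k _ =>
    hasDerivAt_mulVec (hΨk k t) (hg.integral_hasStrictDerivAt (τ k) t).hasDerivAt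
  refine hderiv.congr_deriv ?_
  rw [Finset.sum_add_distrib, ← Matrix.sum_mulVec, hsum, hΨ.mulVec_inv_mulVec]
  simp only [splitVariation, Matrix.mulVec_sum, Matrix.mulVec_mulVec]

end SplitVariation

lemma exists_eq_mulVec_add_and_boundary_iff {R T ι d e : Type*} [CommRing R] [Fintype ι]
    [Fintype d] [DecidableEq d] [Fintype e] {F : ι → Matrix d e R} {Ψ : T → Matrix e d R}
    {τ : ι → T} (hF₀ : IsUnit (∑ j, F j * Ψ (τ j))) {x y : T → e → R} {α : d → R} :
    ((∃ c, ∀ t, x t = Ψ t *ᵥ c + y t) ∧ ∑ j, F j *ᵥ x (τ j) = α) ↔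
      ∀ t, x t = Ψ t *ᵥ ((∑ j, F j * Ψ (τ j))⁻¹ *ᵥ (α - ∑ j, F j *ᵥ y (τ j))) + y t := by
  have hdet := (Matrix.isUnit_iff_isUnit_det _).1 hF₀
  have hboundary : ∀ c, (∀ t, x t = Ψ t *ᵥ c + y t) →
      ∑ j, F j *ᵥ x (τ j) = (∑ j, F j * Ψ (τ j)) *ᵥ c + ∑ j, F j *ᵥ y (τ j) := fun c hc => by
    simp only [hc, Matrix.mulVec_add, Finset.sum_add_distrib, Matrix.sum_mulVec,
      Matrix.mulVec_mulVec]
  constructor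
  · rintro ⟨⟨c, hc⟩, rfl⟩
    rwa [hboundary c hc, add_sub_cancel_right, Matrix.mulVec_mulVec,
      Matrix.nonsing_inv_mul _ hdet, Matrix.one_mulVec]
  · intro hx
    refine ⟨⟨_, hx⟩, ?_⟩
    rw [hboundary _ hx, Matrix.mulVec_mulVec, Matrix.mul_nonsing_inv _ hdet, Matrix.one_mulVec,
      sub_add_cancel]

theorem stmt_12_general {𝔸 d ι κ : Type*} [NormedCommRing 𝔸] [NormedAlgebra ℝ 𝔸]
    [CompleteSpace 𝔸] [Fintype d] [DecidableEq d] [Fintype ι] [Fintype κ]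
    {A B : ℝ → Matrix d d 𝔸} {f : ℝ → d → 𝔸}
    (hAB : Continuous fun t => A t - B t) (hf : Continuous f)
    (τ : ι → ℝ) (σ : κ → ℝ) (F : ι → Matrix d d 𝔸) (α : d → 𝔸)
    {Ψ : ℝ → Matrix d d 𝔸} (hΨ : IsFundamentalMatrix B Ψ)
    {Ψk : κ → ℝ → Matrix d d 𝔸} (hΨk : ∀ k t, HasDerivAt (Ψk k) (B t * Ψk k t) t)
    (hsum : ∀ t, ∑ k, Ψk k t = Ψ t) (hF₀ : IsUnit (∑ j, F j * Ψ (τ j)))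
    {x : ℝ → d → 𝔸} (hx : Continuous x) :
    ((∀ t, HasDerivAt x (A t *ᵥ x t + f t) t) ∧ ∑ j, F j *ᵥ x (τ j) = α) ↔
      ∀ t, x t =
        Ψ t *ᵥ ((∑ j, F j * Ψ (τ j))⁻¹ *ᵥ
          (α - ∑ j, F j *ᵥ splitVariation Ψ Ψk σ (fun s => (A s - B s) *ᵥ x s + f s) (τ j))) +
        splitVariation Ψ Ψk σ (fun s => (A s - B s) *ᵥ x s + f s) t := by
  have hforcing : Continuous fun s => (A s - B s) *ᵥ x s + f s :=
    (hAB.matrix_mulVec hx).add hf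
  have hrewrite : ∀ t, A t *ᵥ x t + f t = B t *ᵥ x t + ((A t - B t) *ᵥ x t + f t) := fun t => by
    rw [Matrix.sub_mulVec, ← add_assoc, add_sub_cancel]
  simp only [hrewrite]
  rw [hΨ.inhomogeneous_iff_exists_eq_mulVec_add
      (hasDerivAt_splitVariation hΨ hΨk hsum σ hforcing),
    exists_eq_mulVec_add_and_boundary_iff hF₀]

/-- Remark 2 (equivalence with the integral equation): with `Ψ` a fundamental matrix for the
"near" system `ẋ = B(t)x`, a splitting `Ψ₁, …, Ψ_m` of `Ψ`, and `F₀ = Σ_j F_j Ψ(t_j)`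
invertible, a continuous `x` solves the boundary value problem `ẋ = A(t)x + f(t)`,
`Σ_j F_j x(t_j) = α` iff it solves the integral equation `x = Lx`. -/
theorem stmt_12 (n m : ℕ) (hm : 2 ≤ m)
    (A B : ℝ → Matrix (Fin n) (Fin n) ℝ) (f : ℝ → Fin n → ℝ)
    (hA : Continuous A) (hB : Continuous B) (hf : Continuous f)
    (ts : Fin m → ℝ) (hmono : StrictMono ts)
    (h0 : ts ⟨0, by omega⟩ = 0) (h1 : ts ⟨m - 1, by omega⟩ = 1)
    (F : Fin m → Matrix (Fin n) (Fin n) ℝ) (α : Fin n → ℝ)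
    (Ψ : ℝ → Matrix (Fin n) (Fin n) ℝ)
    (hΨ : ∀ t i j, HasDerivAt (fun s => Ψ s i j) ((B t * Ψ t) i j) t)
    (hΨinv : ∀ t, IsUnit (Ψ t))
    (Ψk : Fin m → ℝ → Matrix (Fin n) (Fin n) ℝ)
    (hΨk : ∀ k t i j, HasDerivAt (fun s => Ψk k s i j) ((B t * Ψk k t) i j) t)
    (hsum : ∀ t, ∑ k, Ψk k t = Ψ t)
    (hF₀ : IsUnit (∑ j, F j * Ψ (ts j)))
    (x : ℝ → Fin n → ℝ) (hx : Continuous x) :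
    ((∀ t, HasDerivAt x (A t *ᵥ x t + f t) t) ∧ ∑ j, F j *ᵥ x (ts j) = α) ↔
      (∀ t, x t =
        Ψ t *ᵥ ((∑ j, F j * Ψ (ts j))⁻¹ *ᵥ
          (α - ∑ j, F j *ᵥ ∑ k, Ψk k (ts j) *ᵥ
            ∫ s in ts k..ts j, (Ψ s)⁻¹ *ᵥ ((A s - B s) *ᵥ x s + f s))) +
        ∑ k, Ψk k t *ᵥ ∫ s in ts k..t, (Ψ s)⁻¹ *ᵥ ((A s - B s) *ᵥ x s + f s)) :=
  stmt_12_general (hA.sub hB) hf ts ts F α ⟨fun t => hasDerivAt_matrix_iff.2 (hΨ t), hΨinv⟩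
    (fun k t => hasDerivAt_matrix_iff.2 (hΨk k t)) hsum hF₀ hx
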